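/- Let Ω ⊂ ℝⁿ be a bounded domain with smooth boundary, let B be a regular majorant, and let u be a bounded harmonic function in Ω. Then u ∈ Λ_B(Ω) if and only if there is a constant C > 0 such that |∇u(x)| ≤ C·B(δ(x))/δ(x) for every x ∈ Ω, where δ(x) is the Euclidean distance of x to bΩ. -/

import Mathlib

open MeasureTheory Metric Set

noncomputable section

/-- `ℝⁿ` as a Euclidean space. -/
abbrev En (n : ℕ) := EuclideanSpace ℝ (Fin n)

/-- A majorant: a continuous function `B : [0,∞) → [0,∞)` with `B 0 = 0`,
`B` non-decreasing, and `t ↦ B t / t` non-increasing on `(0,∞)`. -/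
def Majorant (B : ℝ → ℝ) : Prop :=
  ContinuousOn B (Ici 0) ∧ (∀ t, 0 ≤ t → 0 ≤ B t) ∧ B 0 = 0 ∧
  (∀ s t, 0 ≤ s → s ≤ t → B s ≤ B t) ∧
  (∀ s t, 0 < s → s ≤ t → B t / t ≤ B s / s)

/-- A regular majorant: a majorant satisfying
`∫₀^δ B t / t dt + δ • ∫_δ^∞ B t / t ^ 2 dt ≤ C * B δ` for all sufficiently small `δ > 0`. -/
def RegularMajorant (B : ℝ → ℝ) : Prop :=
  Majorant B ∧ ∃ C > (0:ℝ), ∃ δ₁ > (0:ℝ), ∀ δ : ℝ, 0 < δ → δ ≤ δ₁ →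
    (∫⁻ t in Ioc (0:ℝ) δ, ENNReal.ofReal (B t / t)) +
      ENNReal.ofReal δ * (∫⁻ t in Ioi δ, ENNReal.ofReal (B t / t ^ 2)) ≤
    ENNReal.ofReal (C * B δ)

/-- `f` is Lipschitz-`B` on `S`, i.e. `f ∈ Λ_B(S)`. -/
def LipschitzB {E : Type*} [NormedAddCommGroup E] (B : ℝ → ℝ) (f : E → ℝ) (S : Set E) : Prop :=
  ∃ C > (0:ℝ), ∀ x ∈ S, ∀ y ∈ S, |f x - f y| ≤ C * B ‖x - y‖

/-- `u` is harmonic on `Ω`: it is `C²` there and its Laplacian vanishes. -/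
def IsHarmonicOn {n : ℕ} (u : En n → ℝ) (Ω : Set (En n)) : Prop :=
  ContDiffOn ℝ 2 u Ω ∧ ∀ x ∈ Ω,
    (∑ i : Fin n, fderiv ℝ (fun y => fderiv ℝ u y (EuclideanSpace.single i 1)) x
      (EuclideanSpace.single i 1)) = 0

/-- `Ω` has `C^∞` smooth boundary: there is a smooth defining function on a
neighbourhood of the boundary with non-vanishing gradient. -/
def HasSmoothBoundary {n : ℕ} (Ω : Set (En n)) : Prop :=
  ∃ (U : Set (En n)) (r : En n → ℝ), IsOpen U ∧ frontier Ω ⊆ U ∧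
    ContDiffOn ℝ (⊤ : ℕ∞) r U ∧ (∀ x ∈ U, (x ∈ Ω ↔ r x < 0)) ∧
    ∀ x ∈ frontier Ω, gradient r x ≠ 0

/-- `ν` is the outward unit normal to `bΩ` at `p`: it is a unit vector and moving
from `p` into `Ω` along `-ν` realizes the distance to the boundary. -/
def IsOutwardUnitNormal {n : ℕ} (Ω : Set (En n)) (p ν : En n) : Prop :=
  ‖ν‖ = 1 ∧ ∀ᶠ t in nhdsWithin (0:ℝ) (Ioi 0),
    p - t • ν ∈ Ω ∧ infDist (p - t • ν) (frontier Ω) = t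


/-- At a local maximum, the second derivative is nonpositive. -/
theorem second_deriv_nonpos_of_isLocalMax {h h' : ℝ → ℝ} {a x : ℝ}
    (hh : ∀ᶠ s in nhds x, HasDerivAt h (h' s) s) (hh' : HasDerivAt h' a x)
    (hmax : IsLocalMax h x) : a ≤ 0 := by
  by_contra! ha
  have hderiv : deriv h =ᶠ[nhds x] h' := hh.mono fun s hs => hs.deriv
  have hmin : IsLocalMin h x := by
    refine isLocalMin_of_deriv_deriv_pos ?_ hmax.deriv_eq_zero hh.self_of_nhds.continuousAt
    rw [hderiv.deriv_eq, hh'.deriv]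
    exact ha
  have hconst : h =ᶠ[nhds x] fun _ => h x := by
    filter_upwards [hmax, hmin] with s hs₁ hs₂
    exact le_antisymm hs₁ hs₂
  have hzero : h' =ᶠ[nhds x] fun _ => 0 := by
    filter_upwards [hconst.eventuallyEq_nhds, hh] with s hs hs'
    rw [← hs'.deriv, hs.deriv_eq, deriv_const]
  have := hzero.deriv_eq
  rw [hh'.deriv, deriv_const] at this
  exact ha.ne' this

theorem hasDerivAt_comp_line {E : Type*} [NormedAddCommGroup E] [NormedSpace ℝ E]
    {f : E → ℝ} {p v : E} {s : ℝ} (hf : DifferentiableAt ℝ f (p + s • v)) :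
    HasDerivAt (fun s : ℝ => f (p + s • v)) (fderiv ℝ f (p + s • v) v) s := by
  have hline : HasDerivAt (fun s : ℝ => p + s • v) v s := by
    simpa using ((hasDerivAt_id s).smul_const v).const_add p
  exact hf.hasFDerivAt.comp_hasDerivAt s hline

theorem IsHarmonicOn.differentiableAt {n : ℕ} {Ω : Set (En n)} {u : En n → ℝ}
    (hu : IsHarmonicOn u Ω) (hΩ : IsOpen Ω) {x : En n} (hx : x ∈ Ω) :
    DifferentiableAt ℝ u x :=
  (hu.1.contDiffAt (hΩ.mem_nhds hx)).differentiableAt (by norm_num)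

theorem IsHarmonicOn.differentiableAt_fderiv_apply {n : ℕ} {Ω : Set (En n)} {u : En n → ℝ}
    (hu : IsHarmonicOn u Ω) (hΩ : IsOpen Ω) {x : En n} (hx : x ∈ Ω) (v : En n) :
    DifferentiableAt ℝ (fun y => fderiv ℝ u y v) x := by
  have h : ContDiffAt ℝ 1 (fderiv ℝ u) x :=
    (hu.1.contDiffAt (hΩ.mem_nhds hx)).fderiv_right (by norm_num)
  exact (h.differentiableAt (by norm_num)).clm_apply (differentiableAt_const v)

theorem IsHarmonicOn.neg {n : ℕ} {Ω : Set (En n)} {u : En n → ℝ}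
    (hu : IsHarmonicOn u Ω) : IsHarmonicOn (fun x => -u x) Ω := by
  refine ⟨hu.1.neg, fun x hx => ?_⟩
  simpa [fderiv_fun_neg] using hu.2 x hx

theorem hasDerivAt_quadratic (α β γ s : ℝ) :
    HasDerivAt (fun s : ℝ => α + β * s + γ * s ^ 2) (β + 2 * γ * s) s := by
  have h : HasDerivAt (fun s : ℝ => α + β * s + γ * s ^ 2) (β * 1 + γ * (2 * s)) s := by
    simpa using (((hasDerivAt_id' s).const_mul β).const_add α).fun_add
      ((hasDerivAt_pow 2 s).const_mul γ)
  exact h.congr_deriv (by ring)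

theorem norm_sq_add_smul_single {n : ℕ} (q : En n) (j : Fin n) (s : ℝ) :
    ‖q + s • (EuclideanSpace.single j 1 : En n)‖ ^ 2 = ‖q‖ ^ 2 + 2 * s * q j + s ^ 2 := by
  rw [norm_add_sq_real, inner_smul_right, norm_smul, mul_pow]
  simp [EuclideanSpace.inner_single_right]
  ring

/-- Comparison with a quadratic barrier on a half ball: for a harmonic function of oscillation at
most `2 * M` on a closed ball, this controls the part that is odd under the reflection across
a coordinate hyperplane through the centre. -/
theorem IsHarmonicOn.odd_part_le_barrier {n : ℕ} {Ω : Set (En n)} {u : En n → ℝ}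
    (hu : IsHarmonicOn u Ω) (hΩ : IsOpen Ω) {x₀ : En n} {d M : ℝ} (hd : 0 < d) (hM : 0 < M)
    (hball : closedBall x₀ d ⊆ Ω)
    (hosc : ∀ y ∈ closedBall x₀ d, ∀ z ∈ closedBall x₀ d, u y - u z ≤ 2 * M)
    (i : Fin n) (R : En n ≃ₗᵢ[ℝ] En n)
    (hR : R = (Submodule.span ℝ {(EuclideanSpace.single i 1 : En n)})ᗮ.reflection)
    {q : En n} (hq : ‖q‖ ≤ d) (hqi : 0 ≤ q i) :
    u (x₀ + q) - u (x₀ + R q) ≤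
      2 * (M / d ^ 2) * (‖q‖ ^ 2 + (n + 1) * (d * q i - q i ^ 2)) := by
  have hcoord : ∀ p : En n, p i ≤ ‖p‖ := fun p =>
    (le_abs_self _).trans (by simpa using PiLp.norm_apply_le p i)
  have hRi : R (EuclideanSpace.single i 1) = -EuclideanSpace.single i 1 := by
    rw [hR]; exact Submodule.reflection_orthogonalComplement_singleton_eq_neg _
  have hRfix : ∀ p : En n, p i = 0 → R p = p := by
    intro p hp
    rw [hR]
    refine Submodule.reflection_mem_subspace_eq_self ?_
    rw [Submodule.mem_orthogonal_singleton_iff_inner_right]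
    simp [EuclideanSpace.inner_single_left, hp]
  have hmem : ∀ p : En n, ‖p‖ ≤ d → x₀ + p ∈ closedBall x₀ d := by
    intro p hp; simpa [mem_closedBall, dist_eq_norm] using hp
  set c : ℝ := 2 * (M / d ^ 2) with hc
  have hcpos : 0 < c := by positivity
  set g : En n → ℝ := fun p =>
    u (x₀ + p) - u (x₀ + R p) - c * (‖p‖ ^ 2 + (n + 1) * (d * p i - p i ^ 2)) with hg
  set K : Set (En n) := closedBall 0 d ∩ {p | 0 ≤ p i} with hK
  have hKc : IsCompact K := by
    refine (isCompact_closedBall _ _).inter_right (isClosed_le continuous_const ?_)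
    fun_prop
  have hcont : ContinuousOn g K := by
    have hu' : ContinuousOn u (closedBall x₀ d) := hu.1.continuousOn.mono hball
    have h₁ : ContinuousOn (fun p => u (x₀ + p)) K :=
      hu'.comp (by fun_prop) fun p hp => hmem p (by simpa using hp.1)
    have h₂ : ContinuousOn (fun p => u (x₀ + R p)) K :=
      hu'.comp (by fun_prop) fun p hp => hmem _ (by simpa using hp.1)
    refine (h₁.sub h₂).sub ?_
    fun_prop
  have hqK : q ∈ K := ⟨by simpa using hq, hqi⟩
  obtain ⟨p, hpK, hpmax⟩ := hKc.exists_isMaxOn ⟨q, hqK⟩ hcont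
  suffices hgp : g p ≤ 0 by
    have : g q ≤ g p := hpmax hqK
    simp only [hg] at this hgp
    linarith
  have hpd : ‖p‖ ≤ d := by simpa using hpK.1
  have hpi : 0 ≤ p i := hpK.2
  have hbar : 0 ≤ d * p i - p i ^ 2 := by nlinarith [hcoord p]
  rcases hpi.eq_or_lt with hpi0 | hpi0
  · simp only [hg, hRfix p hpi0.symm, sub_self, zero_sub, neg_nonpos]
    positivity
  rcases hpd.eq_or_lt with hpd0 | hpd0
  · have h := hosc _ (hmem p hpd) _ (hmem (R p) (by simpa using hpd))
    have : c * ‖p‖ ^ 2 = 2 * M := by rw [hpd0, hc]; field_simp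
    have h2 : 0 ≤ c * ((n + 1) * (d * p i - p i ^ 2)) := by positivity
    simp only [hg]
    nlinarith
  exfalso
  have hnhds : K ∈ nhds p := by
    refine Filter.inter_mem ?_ ?_
    · exact closedBall_mem_nhds_of_mem (by simpa using hpd0)
    · have : IsOpen {p : En n | 0 < p i} := isOpen_lt continuous_const (by fun_prop)
      exact Filter.mem_of_superset (this.mem_nhds hpi0) fun z (hz : 0 < z i) => hz.le
  have hlocal : IsLocalMax g p := hpmax.isLocalMax hnhds
  have hp₁ : x₀ + p ∈ Ω := hball (hmem p hpd)
  have hp₂ : x₀ + R p ∈ Ω := hball (hmem _ (by simpa using hpd))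
  set D : Fin n → En n → ℝ := fun j x =>
    fderiv ℝ (fun y => fderiv ℝ u y (EuclideanSpace.single j 1)) x (EuclideanSpace.single j 1)
    with hD
  have hsecond : ∀ j : Fin n, D j (x₀ + p) - D j (x₀ + R p) -
      c * (2 - if j = i then 2 * ((n : ℝ) + 1) else 0) ≤ 0 := by
    intro j
    set e : En n := EuclideanSpace.single j 1 with he
    obtain ⟨σ, hσ, hRe⟩ : ∃ σ : ℝ, σ * σ = 1 ∧ R e = σ • e := by
      by_cases hji : j = i
      · exact ⟨-1, by norm_num, by rw [he, hji, hRi]; simp⟩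
      · refine ⟨1, by norm_num, ?_⟩
        rw [hRfix e (by simp [he, Ne.symm hji]), one_smul]
    set κ : ℝ := if j = i then 1 else 0 with hκ
    have hei : e i = κ := by simp [he, hκ, eq_comm]
    set β : ℝ := c * (2 * p j + (n + 1) * (d * κ - 2 * p i * κ)) with hβ
    set γ : ℝ := c * (1 - (n + 1) * κ ^ 2) with hγ
    have hline : (fun s : ℝ => g (p + s • e)) = fun s : ℝ =>
        u (x₀ + p + s • e) - u (x₀ + R p + s • (σ • e)) -
          (c * (‖p‖ ^ 2 + (n + 1) * (d * p i - p i ^ 2)) + β * s + γ * s ^ 2) := by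
      funext s
      have hcoord' : (p + s • e) i = p i + s * κ := by simp [hei]
      simp only [hg]
      rw [norm_sq_add_smul_single p j s, map_add, map_smul, hRe, ← add_assoc x₀,
        ← add_assoc x₀, hcoord']
      ring
    have hmaxline : IsLocalMax (fun s : ℝ => g (p + s • e)) 0 := by
      have ht : Filter.Tendsto (fun s : ℝ => p + s • e) (nhds 0) (nhds p) := by
        have : Continuous fun s : ℝ => p + s • e := by fun_prop
        simpa using this.tendsto 0
      have := ht.eventually hlocal
      simpa [IsLocalMax, IsMaxFilter] using this
    have hev : ∀ z ∈ Ω, ∀ w : En n, ∀ᶠ s : ℝ in nhds 0, z + s • w ∈ Ω := by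
      intro z hz w
      have : Continuous fun s : ℝ => z + s • w := by fun_prop
      exact this.continuousAt.eventually_mem (by simpa using hΩ.mem_nhds hz)
    rw [hline] at hmaxline
    have hu₁ : HasDerivAt (fun s : ℝ => fderiv ℝ u (x₀ + p + s • e) e) (D j (x₀ + p)) 0 := by
      have := hasDerivAt_comp_line (f := fun y => fderiv ℝ u y e) (p := x₀ + p) (v := e)
        (s := 0) (by simpa using hu.differentiableAt_fderiv_apply hΩ hp₁ e)
      simpa [hD] using this
    have hu₂ : HasDerivAt (fun s : ℝ => fderiv ℝ u (x₀ + R p + s • (σ • e)) (σ • e))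
        (D j (x₀ + R p)) 0 := by
      have := (hasDerivAt_comp_line (f := fun y => fderiv ℝ u y e) (p := x₀ + R p) (v := σ • e)
        (s := 0) (by simpa using hu.differentiableAt_fderiv_apply hΩ hp₂ e)).const_mul σ
      have hfun : (fun s : ℝ => fderiv ℝ u (x₀ + R p + s • (σ • e)) (σ • e)) =
          fun s : ℝ => σ * fderiv ℝ u (x₀ + R p + s • (σ • e)) e := by
        funext s; simp
      rw [hfun]
      exact this.congr_deriv (by simp [hD, ← mul_assoc, hσ, he])
    have hlin : HasDerivAt (fun s : ℝ => β + 2 * γ * s) (2 * γ) 0 := by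
      simpa using ((hasDerivAt_id (0 : ℝ)).const_mul (2 * γ)).const_add β
    have hγ' : c * (2 - if j = i then 2 * ((n : ℝ) + 1) else 0) = 2 * γ := by
      by_cases hji : j = i <;> simp [hγ, hκ, hji] <;> ring
    rw [hγ']
    refine second_deriv_nonpos_of_isLocalMax ?_ ((hu₁.sub hu₂).sub hlin) hmaxline
    filter_upwards [hev _ hp₁ e, hev _ hp₂ (σ • e)] with s hs₁ hs₂
    exact ((hasDerivAt_comp_line (hu.differentiableAt hΩ hs₁)).sub
      (hasDerivAt_comp_line (hu.differentiableAt hΩ hs₂))).sub (hasDerivAt_quadratic _ β γ s)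
  have hsum := Finset.sum_nonpos fun j (_ : j ∈ Finset.univ) => hsecond j
  rw [Finset.sum_sub_distrib, Finset.sum_sub_distrib, hu.2 _ hp₁, hu.2 _ hp₂,
    ← Finset.mul_sum, Finset.sum_sub_distrib] at hsum
  simp at hsum
  nlinarith

theorem IsHarmonicOn.fderiv_single_le {n : ℕ} {Ω : Set (En n)} {u : En n → ℝ}
    (hu : IsHarmonicOn u Ω) (hΩ : IsOpen Ω) {x₀ : En n} {d M : ℝ} (hd : 0 < d) (hM : 0 < M)
    (hball : closedBall x₀ d ⊆ Ω)
    (hosc : ∀ y ∈ closedBall x₀ d, ∀ z ∈ closedBall x₀ d, u y - u z ≤ 2 * M) (i : Fin n) :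
    fderiv ℝ u x₀ (EuclideanSpace.single i 1) ≤ (n + 1) * M / d := by
  set e : En n := EuclideanSpace.single i 1 with he
  have hx₀ : x₀ ∈ Ω := hball (mem_closedBall_self hd.le)
  have hR : (Submodule.span ℝ {e})ᗮ.reflection e = -e :=
    Submodule.reflection_orthogonalComplement_singleton_eq_neg _
  have hdiff := hu.differentiableAt hΩ hx₀
  have h₁ : HasDerivAt (fun t : ℝ => u (x₀ + t • e)) (fderiv ℝ u x₀ e) 0 := by
    simpa using hasDerivAt_comp_line (p := x₀) (v := e) (s := 0) (by simpa using hdiff)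
  have h₂ : HasDerivAt (fun t : ℝ => u (x₀ + t • (-e))) (-fderiv ℝ u x₀ e) 0 := by
    simpa using hasDerivAt_comp_line (p := x₀) (v := -e) (s := 0) (by simpa using hdiff)
  have hslope := (h₁.sub h₂).tendsto_slope_zero_right
  have hbound : Filter.Tendsto
      (fun t : ℝ => 2 * (M / d ^ 2) * (t + (n + 1) * (d - t))) (nhdsWithin 0 (Ioi 0))
      (nhds (2 * (M / d ^ 2) * (0 + (n + 1) * (d - 0)))) := by
    have : Continuous fun t : ℝ => 2 * (M / d ^ 2) * (t + (n + 1) * (d - t)) := by fun_prop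
    exact (this.tendsto 0).mono_left nhdsWithin_le_nhds
  have hle := le_of_tendsto_of_tendsto hslope hbound ?_
  · have : 2 * (M / d ^ 2) * (0 + (n + 1) * (d - 0)) = 2 * ((n + 1) * M / d) := by
      field_simp; ring
    linarith
  · filter_upwards [Ioo_mem_nhdsGT hd] with t ht
    have h := hu.odd_part_le_barrier hΩ hd hM hball hosc i _ rfl (q := t • e)
      (by rw [norm_smul]; simpa [he, abs_of_pos ht.1] using ht.2.le) (by simpa [he] using ht.1.le)
    rw [map_smul, hR] at h
    have hnorm : ‖t • e‖ ^ 2 = t ^ 2 := by rw [norm_smul]; simp [he]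
    have hti : (t • e) i = t := by simp [he]
    rw [hnorm, hti] at h
    have ht0 : 0 < t := ht.1
    simp only [Pi.sub_apply, zero_add, zero_smul, add_zero, sub_self, sub_zero, smul_eq_mul]
    rw [inv_mul_le_iff₀ ht0]
    linarith

/-- Interior gradient estimate for harmonic functions. -/
theorem IsHarmonicOn.norm_gradient_le {n : ℕ} {Ω : Set (En n)} {u : En n → ℝ}
    (hu : IsHarmonicOn u Ω) (hΩ : IsOpen Ω) {x₀ : En n} {d M : ℝ} (hd : 0 < d) (hM : 0 ≤ M)
    (hball : closedBall x₀ d ⊆ Ω)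
    (hosc : ∀ y ∈ closedBall x₀ d, ∀ z ∈ closedBall x₀ d, |u y - u z| ≤ 2 * M) :
    ‖gradient u x₀‖ ≤ n * ((n + 1) * M / d) := by
  have hpart : ∀ i : Fin n, |fderiv ℝ u x₀ (EuclideanSpace.single i 1)| ≤ (n + 1) * M / d := by
    intro i
    have hM' : ∀ M' > M, |fderiv ℝ u x₀ (EuclideanSpace.single i 1)| ≤ (n + 1) * M' / d := by
      intro M' hM'
      have hpos : 0 < M' := hM.trans_lt hM'
      refine abs_le.2 ⟨?_, hu.fderiv_single_le hΩ hd hpos hball (fun y hy z hz => ?_) i⟩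
      · have := hu.neg.fderiv_single_le hΩ hd hpos hball (fun y hy z hz => ?_) i
        · simp only [fderiv_fun_neg, neg_apply] at this
          linarith
        · linarith [(abs_le.1 (hosc y hy z hz)).1]
      · linarith [(abs_le.1 (hosc y hy z hz)).2]
    have ht : Filter.Tendsto (fun M' : ℝ => (n + 1) * M' / d) (nhdsWithin M (Ioi M))
        (nhds ((n + 1) * M / d)) := by
      have : Continuous fun M' : ℝ => (n + 1) * M' / d := by fun_prop
      exact (this.tendsto M).mono_left nhdsWithin_le_nhds
    exact ge_of_tendsto ht (Filter.eventually_of_mem self_mem_nhdsWithin hM')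
  have hcoord : ∀ i : Fin n, gradient u x₀ i = fderiv ℝ u x₀ (EuclideanSpace.single i 1) := by
    intro i
    rw [← InnerProductSpace.toDual_symm_apply (𝕜 := ℝ), EuclideanSpace.inner_single_right]
    simp [gradient]
  calc ‖gradient u x₀‖ = ‖∑ i, EuclideanSpace.single i (gradient u x₀ i)‖ := by
        congr 1
        ext j
        simp [Finset.sum_apply, Pi.single_apply]
    _ ≤ ∑ i, ‖(EuclideanSpace.single i (gradient u x₀ i) : En n)‖ := norm_sum_le _ _
    _ ≤ ∑ _i : Fin n, (n + 1) * M / d := by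
        refine Finset.sum_le_sum fun i _ => ?_
        rw [PiLp.norm_single, hcoord]
        exact hpart i
    _ = n * ((n + 1) * M / d) := by simp

theorem ball_infDist_frontier_subset {E : Type*} [NormedAddCommGroup E] [NormedSpace ℝ E]
    {Ω : Set E} (hΩ : IsOpen Ω) {x : E} (hx : x ∈ Ω) :
    ball x (infDist x (frontier Ω)) ⊆ Ω := by
  rcases (infDist_nonneg (x := x) (s := frontier Ω)).eq_or_lt with h0 | hpos
  · simp [← h0]
  refine (isPreconnected_ball (x := x) (r := infDist x (frontier Ω))).subset_left_of_subset_union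
    (v := (closure Ω)ᶜ) hΩ isClosed_closure.isOpen_compl ?_ ?_ ⟨x, mem_ball_self hpos, hx⟩
  · exact disjoint_compl_right.mono_left subset_closure
  · intro y hy
    by_cases hyΩ : y ∈ Ω
    · exact Or.inl hyΩ
    · refine Or.inr fun hycl => ?_
      have hyf : y ∈ frontier Ω := by rw [hΩ.frontier_eq]; exact ⟨hycl, hyΩ⟩
      have := infDist_le_dist_of_mem (x := x) hyf
      rw [mem_ball, dist_comm] at hy
      exact absurd hy this.not_gt

theorem le_infDist_frontier_of_ball_subset {E : Type*} [PseudoMetricSpace E] {Ω : Set E}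
    (hΩ : IsOpen Ω) (hne : (frontier Ω).Nonempty) {x : E} {ρ : ℝ} (h : ball x ρ ⊆ Ω) :
    ρ ≤ infDist x (frontier Ω) := by
  refine (le_infDist hne).2 fun y hy => ?_
  by_contra! hlt
  rw [hΩ.frontier_eq] at hy
  exact hy.2 (h (by rwa [mem_ball, dist_comm]))

theorem norm_fderiv_eq_norm_gradient {n : ℕ} (f : En n → ℝ) (x : En n) :
    ‖fderiv ℝ f x‖ = ‖gradient f x‖ := by
  simp [gradient]

theorem HasSmoothBoundary.exists_inward_direction {n : ℕ} {Ω : Set (En n)}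
    (hs : HasSmoothBoundary Ω) {p : En n} (hp : p ∈ frontier Ω) :
    ∃ ε > (0 : ℝ), ∃ v : En n, ‖v‖ = 1 ∧ ∀ x ∈ Ω, dist x p < ε → ∀ t : ℝ, 0 < t → t < ε →
      ball (x + t • v) (t / 2) ⊆ Ω := by
  obtain ⟨U, r, hU, hfU, hr, hrΩ, hgrad⟩ := hs
  have hpU := hfU hp
  set a : ℝ := ‖gradient r p‖ with ha
  have hapos : 0 < a := norm_pos_iff.2 (hgrad p hp)
  have hstrict : HasStrictFDerivAt r (fderiv ℝ r p) p :=
    (hr.contDiffAt (hU.mem_nhds hpU)).hasStrictFDerivAt (by simp)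
  obtain ⟨S, hS, happrox⟩ := hstrict.approximates_deriv_on_nhds (c := (a / 4).toNNReal)
    (Or.inr (Real.toNNReal_pos.2 (by positivity)))
  obtain ⟨η, hη, hball⟩ := Metric.mem_nhds_iff.1 (Filter.inter_mem hS (hU.mem_nhds hpU))
  have hv : ‖-(a⁻¹ • gradient r p)‖ = 1 := by
    rw [norm_neg, norm_smul, norm_inv, norm_norm]
    exact inv_mul_cancel₀ hapos.ne'
  refine ⟨η / 3, by positivity, -(a⁻¹ • gradient r p), hv, ?_⟩
  set v : En n := -(a⁻¹ • gradient r p) with hvdef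
  intro x hx hxp t ht htη y hy
  have hxη : x ∈ ball p η := by rw [mem_ball]; linarith
  set w : En n := y - (x + t • v) with hw
  have hwt : ‖w‖ < t / 2 := by rwa [mem_ball, dist_eq_norm] at hy
  have hyx : y - x = t • v + w := by rw [hw]; abel
  have htv : ‖t • v‖ = t := by rw [norm_smul, hv, mul_one, Real.norm_of_nonneg ht.le]
  have hyx' : ‖y - x‖ ≤ t + ‖w‖ := by
    have := norm_add_le (t • v) w
    rwa [htv, ← hyx] at this
  have hyη : y ∈ ball p η := by
    have := dist_triangle y x p
    rw [dist_eq_norm y x] at this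
    rw [mem_ball]; linarith
  have hrx : r x < 0 := (hrΩ x (hball hxη).2).1 hx
  refine (hrΩ y (hball hyη).2).2 ?_
  have happ := happrox y (hball hyη).1 x (hball hxη).1
  rw [Real.coe_toNNReal _ (by positivity)] at happ
  have happ' : r y - r x - fderiv ℝ r p (y - x) ≤ a / 4 * ‖y - x‖ :=
    (le_abs_self _).trans happ
  have hdv : fderiv ℝ r p v = -a := by
    rw [← inner_gradient_left, hvdef, inner_neg_right, inner_smul_right,
      real_inner_self_eq_norm_sq, ← ha]
    field_simp
  have hdw : fderiv ℝ r p w ≤ a * ‖w‖ := by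
    refine (le_abs_self _).trans ?_
    have := (fderiv ℝ r p).le_opNorm w
    rwa [norm_fderiv_eq_norm_gradient] at this
  have hd : fderiv ℝ r p (y - x) ≤ -a * t + a * ‖w‖ := by
    rw [hyx, map_add, map_smul, hdv, smul_eq_mul]
    linarith
  nlinarith

theorem HasSmoothBoundary.exists_uniform_inward_direction {n : ℕ} {Ω : Set (En n)}
    (hs : HasSmoothBoundary Ω) (hbdd : Bornology.IsBounded Ω) :
    ∃ ε > (0 : ℝ), ∀ p ∈ frontier Ω, ∃ v : En n, ‖v‖ = 1 ∧ ∀ x ∈ Ω, dist x p < ε →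
      ∀ t : ℝ, 0 < t → t < ε → ball (x + t • v) (t / 2) ⊆ Ω := by
  have hcomp : IsCompact (frontier Ω) :=
    isCompact_of_isClosed_isBounded isClosed_frontier
      (hbdd.closure.subset frontier_subset_closure)
  refine hcomp.induction_on
    (p := fun S => ∃ ε > (0 : ℝ), ∀ p ∈ S, ∃ v : En n, ‖v‖ = 1 ∧ ∀ x ∈ Ω, dist x p < ε →
      ∀ t : ℝ, 0 < t → t < ε → ball (x + t • v) (t / 2) ⊆ Ω) ?_ ?_ ?_ ?_
  · exact ⟨1, one_pos, by simp⟩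
  · rintro S T hST ⟨ε, hε, h⟩
    exact ⟨ε, hε, fun p hp => h p (hST hp)⟩
  · rintro S T ⟨ε₁, hε₁, h₁⟩ ⟨ε₂, hε₂, h₂⟩
    refine ⟨min ε₁ ε₂, lt_min hε₁ hε₂, ?_⟩
    rintro p (hp | hp)
    · obtain ⟨v, hv, h⟩ := h₁ p hp
      exact ⟨v, hv, fun x hx hxp t ht htε =>
        h x hx (hxp.trans_le (min_le_left _ _)) t ht (htε.trans_le (min_le_left _ _))⟩
    · obtain ⟨v, hv, h⟩ := h₂ p hp
      exact ⟨v, hv, fun x hx hxp t ht htε =>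
        h x hx (hxp.trans_le (min_le_right _ _)) t ht (htε.trans_le (min_le_right _ _))⟩
  · intro p hp
    obtain ⟨ε, hε, v, hv, h⟩ := hs.exists_inward_direction hp
    refine ⟨ball p (ε / 2), mem_nhdsWithin_of_mem_nhds (ball_mem_nhds p (half_pos hε)),
      ε / 2, half_pos hε, fun q hq => ⟨v, hv, fun x hx hxq t ht htε => ?_⟩⟩
    refine h x hx ?_ t ht (by linarith)
    have := dist_triangle x q p
    rw [mem_ball] at hq
    linarith

/-- A function with the gradient bound has the right modulus of continuity at scales below the
distance to the boundary. -/
theorem abs_sub_le_of_gradient_bound_interior {n : ℕ} {Ω : Set (En n)} (hΩ : IsOpen Ω)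
    {B : ℝ → ℝ} (hB : Majorant B) {u : En n → ℝ} (hu : ∀ x ∈ Ω, DifferentiableAt ℝ u x)
    {C : ℝ} (hC : 0 < C)
    (hgrad : ∀ x ∈ Ω,
      ‖gradient u x‖ ≤ C * B (infDist x (frontier Ω)) / infDist x (frontier Ω))
    {x y : En n} (hx : x ∈ Ω) (hxy : x ≠ y) (hdist : 2 * ‖x - y‖ ≤ infDist x (frontier Ω)) :
    |u x - u y| ≤ C * B ‖x - y‖ := by
  set s : ℝ := ‖x - y‖ with hs
  have hspos : 0 < s := norm_pos_iff.2 (sub_ne_zero.2 hxy)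
  have hsub : closedBall x s ⊆ Ω :=
    (closedBall_subset_ball (by linarith)).trans (ball_infDist_frontier_subset hΩ hx)
  have hbound : ∀ z ∈ closedBall x s, ‖fderiv ℝ u z‖ ≤ C * (B s / s) := by
    intro z hz
    have hδ : s ≤ infDist z (frontier Ω) := by
      have := infDist_le_infDist_add_dist (x := x) (y := z) (s := frontier Ω)
      rw [mem_closedBall, dist_comm] at hz
      linarith
    rw [norm_fderiv_eq_norm_gradient]
    refine (hgrad z (hsub hz)).trans ?_
    rw [mul_div_assoc]
    exact mul_le_mul_of_nonneg_left (hB.2.2.2.2 _ _ hspos hδ) hC.le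
  have h := (convex_closedBall x s).norm_image_sub_le_of_norm_fderiv_le
    (fun z hz => hu z (hsub hz)) hbound (x := y) (y := x)
    (by rw [mem_closedBall, dist_comm, dist_eq_norm]) (mem_closedBall_self hspos.le)
  rw [← hs, Real.norm_eq_abs] at h
  refine h.trans_eq ?_
  field_simp

theorem abs_sub_le_of_gradient_bound_ray {n : ℕ} {Ω : Set (En n)} (hΩ : IsOpen Ω)
    {B : ℝ → ℝ} (hB : Majorant B) {u : En n → ℝ} (hu : ContDiffOn ℝ 1 u Ω)
    {C : ℝ} (hC : 0 < C)
    (hgrad : ∀ x ∈ Ω,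
      ‖gradient u x‖ ≤ C * B (infDist x (frontier Ω)) / infDist x (frontier Ω))
    {x v : En n} (hv : ‖v‖ = 1) {T A : ℝ} (hT : 0 < T) (hA : 0 ≤ A)
    (hlint : ∫⁻ t in Ioc (0 : ℝ) T, ENNReal.ofReal (B t / t) ≤ ENNReal.ofReal A)
    (hx : x ∈ Ω) (hray : ∀ t ∈ Ioc (0 : ℝ) T, x + t • v ∈ Ω)
    (hdist : ∀ t ∈ Ioc (0 : ℝ) T, t / 2 ≤ infDist (x + t • v) (frontier Ω)) :
    |u (x + T • v) - u x| ≤ 2 * C * A := by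
  have hray' : ∀ t ∈ Icc (0 : ℝ) T, x + t • v ∈ Ω := by
    intro t ht
    rcases ht.1.eq_or_lt with h0 | hpos
    · simpa [← h0] using hx
    · exact hray t ⟨hpos, ht.2⟩
  have hcont : ContinuousOn (fun t : ℝ => fderiv ℝ u (x + t • v) v) (uIcc 0 T) := by
    rw [uIcc_of_le hT.le]
    have h := (hu.continuousOn_fderiv_of_isOpen hΩ le_rfl).comp
      (f := fun t : ℝ => x + t • v) (s := Icc 0 T) (by fun_prop) hray'
    exact h.clm_apply continuousOn_const
  have hftc : ∫ t in (0 : ℝ)..T, fderiv ℝ u (x + t • v) v = u (x + T • v) - u x := by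
    have := intervalIntegral.integral_eq_sub_of_hasDerivAt
      (f := fun t : ℝ => u (x + t • v)) (a := 0) (b := T)
      (fun t ht => hasDerivAt_comp_line ?_) hcont.intervalIntegrable
    · simpa using this
    · rw [uIcc_of_le hT.le] at ht
      exact (hu.contDiffAt (hΩ.mem_nhds (hray' t ht))).differentiableAt (by norm_num)
  have hpt : ∀ t ∈ Ioc (0 : ℝ) T,
      ‖fderiv ℝ u (x + t • v) v‖ₑ ≤ ENNReal.ofReal (2 * C) * ENNReal.ofReal (B t / t) := by
    intro t ht
    have ht0 : 0 < t := ht.1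
    rw [← ENNReal.ofReal_mul (by positivity), ← ofReal_norm]
    refine ENNReal.ofReal_le_ofReal ?_
    calc ‖fderiv ℝ u (x + t • v) v‖ ≤ ‖gradient u (x + t • v)‖ := by
          have := (fderiv ℝ u (x + t • v)).le_opNorm v
          rwa [hv, mul_one, norm_fderiv_eq_norm_gradient] at this
      _ ≤ C * (B (t / 2) / (t / 2)) := by
          refine (hgrad _ (hray t ht)).trans ?_
          rw [mul_div_assoc]
          exact mul_le_mul_of_nonneg_left (hB.2.2.2.2 _ _ (half_pos ht0) (hdist t ht)) hC.le
      _ ≤ C * (B t / (t / 2)) := by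
          have := hB.2.2.2.1 (t / 2) t (by linarith) (by linarith)
          gcongr
      _ = 2 * C * (B t / t) := by field_simp
  have hle : ‖u (x + T • v) - u x‖ₑ ≤ ENNReal.ofReal (2 * C * A) := by
    rw [← hftc, intervalIntegral.integral_of_le hT.le]
    calc _ ≤ ∫⁻ t in Ioc (0 : ℝ) T, ‖fderiv ℝ u (x + t • v) v‖ₑ :=
          enorm_integral_le_lintegral_enorm _
      _ ≤ ∫⁻ t in Ioc (0 : ℝ) T, ENNReal.ofReal (2 * C) * ENNReal.ofReal (B t / t) :=
          setLIntegral_mono' measurableSet_Ioc hpt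
      _ = ENNReal.ofReal (2 * C) * ∫⁻ t in Ioc (0 : ℝ) T, ENNReal.ofReal (B t / t) :=
          lintegral_const_mul' _ _ ENNReal.ofReal_ne_top
      _ ≤ ENNReal.ofReal (2 * C) * ENNReal.ofReal A := by gcongr
      _ = ENNReal.ofReal (2 * C * A) := (ENNReal.ofReal_mul (by positivity)).symm
  rw [← ofReal_norm, ENNReal.ofReal_le_ofReal_iff (by positivity)] at hle
  exact hle

theorem Majorant.mul_le {B : ℝ → ℝ} (hB : Majorant B) {k s : ℝ} (hk : 1 ≤ k) (hs : 0 < s) :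
    B (k * s) ≤ k * B s := by
  have hk0 : 0 < k := one_pos.trans_le hk
  have h := hB.2.2.2.2 s (k * s) hs (by nlinarith)
  rw [div_le_div_iff₀ (by positivity) hs] at h
  nlinarith

theorem Majorant.eq_zero_of_eq_zero {B : ℝ → ℝ} (hB : Majorant B) {s : ℝ} (hs : 0 < s)
    (h0 : B s = 0) {t : ℝ} (ht : 0 ≤ t) : B t = 0 := by
  refine le_antisymm ?_ (hB.2.1 t ht)
  rcases le_total t s with hts | hst
  · exact (hB.2.2.2.1 t s ht hts).trans_eq h0
  · have h := hB.2.2.2.2 s t hs hst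
    rw [h0, zero_div] at h
    have htpos : 0 < t := hs.trans_le hst
    exact (div_nonpos_iff.1 h).elim (fun h => absurd h.2 htpos.not_ge) fun h => h.1

theorem frontier_nonempty_of_isBounded {E : Type*} [NormedAddCommGroup E] [NormedSpace ℝ E]
    [Nontrivial E] {Ω : Set E} (hbdd : Bornology.IsBounded Ω) (hne : Ω.Nonempty) :
    (frontier Ω).Nonempty := by
  refine nonempty_frontier_iff.2 ⟨hne, fun h => ?_⟩
  rw [h] at hbdd
  exact NormedSpace.unbounded_univ ℝ E hbdd

theorem gradient_bound_of_lipschitzB {n : ℕ} {Ω : Set (En n)}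
    (hΩ : IsOpen Ω) (hne : (frontier Ω).Nonempty) {B : ℝ → ℝ} (hB : Majorant B)
    {u : En n → ℝ} (hu : IsHarmonicOn u Ω) (hL : LipschitzB B u Ω) :
    ∃ C > (0 : ℝ), ∀ x ∈ Ω,
      ‖gradient u x‖ ≤ C * B (infDist x (frontier Ω)) / infDist x (frontier Ω) := by
  obtain ⟨C, hC, hL⟩ := hL
  refine ⟨(n * (n + 1) + 1) * C, by positivity, fun x hx => ?_⟩
  set δ : ℝ := infDist x (frontier Ω) with hδ
  have hδpos : 0 < δ := by
    refine (isClosed_frontier.notMem_iff_infDist_pos hne).1 fun hxf => ?_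
    rw [hΩ.frontier_eq] at hxf
    exact hxf.2 hx
  have hBδ : 0 ≤ B δ := hB.2.1 δ hδpos.le
  have hsub : closedBall x (δ / 2) ⊆ Ω :=
    (closedBall_subset_ball (by linarith)).trans (ball_infDist_frontier_subset hΩ hx)
  have h := hu.norm_gradient_le hΩ (half_pos hδpos) (M := C * B δ / 2) (by positivity) hsub
    fun y hy z hz => by
      have hyz : ‖y - z‖ ≤ δ := by
        rw [← dist_eq_norm]
        have := dist_triangle_right y z x
        rw [mem_closedBall] at hy hz
        linarith
      have h₁ := hL y (hsub hy) z (hsub hz)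
      have h₂ := mul_le_mul_of_nonneg_left (hB.2.2.2.1 _ _ (norm_nonneg (y - z)) hyz) hC.le
      linarith
  refine h.trans ?_
  have : 0 ≤ C * B δ / δ := by positivity
  calc (n : ℝ) * ((n + 1) * (C * B δ / 2) / (δ / 2)) = n * (n + 1) * (C * B δ / δ) := by
        field_simp
    _ ≤ (n * (n + 1) + 1) * (C * B δ / δ) := by nlinarith
    _ = (n * (n + 1) + 1) * C * B δ / δ := by ring

theorem lipschitzB_of_gradient_bound {n : ℕ} {Ω : Set (En n)} (hΩ : IsOpen Ω)
    (hconn : IsConnected Ω) (hbdd : Bornology.IsBounded Ω) (hsmooth : HasSmoothBoundary Ω)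
    (hne : (frontier Ω).Nonempty) {B : ℝ → ℝ} (hB : RegularMajorant B)
    {u : En n → ℝ} (hu : ContDiffOn ℝ 1 u Ω) (hu_bdd : ∃ M : ℝ, ∀ x ∈ Ω, |u x| ≤ M)
    (hgrad : ∃ C > (0 : ℝ), ∀ x ∈ Ω,
      ‖gradient u x‖ ≤ C * B (infDist x (frontier Ω)) / infDist x (frontier Ω)) :
    LipschitzB B u Ω := by
  obtain ⟨C, hC, hgrad⟩ := hgrad
  obtain ⟨M, hM⟩ := hu_bdd
  obtain ⟨hmaj, A, hA, δ₁, hδ₁, hreg⟩ := hB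
  obtain ⟨ε, hε, hdir⟩ := hsmooth.exists_uniform_inward_direction hbdd
  have hdiff : ∀ x ∈ Ω, DifferentiableAt ℝ u x := fun x hx =>
    (hu.contDiffAt (hΩ.mem_nhds hx)).differentiableAt (by norm_num)
  set s₀ : ℝ := min ε δ₁ / 5 with hs₀
  have hs₀pos : 0 < s₀ := div_pos (lt_min hε hδ₁) (by norm_num)
  have hs₀ε : 5 * s₀ ≤ ε := by rw [hs₀]; linarith [min_le_left ε δ₁]
  have hs₀δ : 5 * s₀ ≤ δ₁ := by rw [hs₀]; linarith [min_le_right ε δ₁]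
  have hnonneg := hmaj.2.1
  rcases (hnonneg s₀ hs₀pos.le).eq_or_lt with hB0 | hBpos
  · refine ⟨1, one_pos, fun x hx y hy => ?_⟩
    have hconst : u x = u y := by
      refine hΩ.is_const_of_fderiv_eq_zero hconn.isPreconnected
        (fun z hz => (hdiff z hz).differentiableWithinAt) (fun z hz => ?_) hx hy
      have h := hgrad z hz
      rw [hmaj.eq_zero_of_eq_zero hs₀pos hB0.symm infDist_nonneg, mul_zero, zero_div,
        ← norm_fderiv_eq_norm_gradient] at h
      exact norm_le_zero_iff.1 h
    rw [hconst, sub_self, abs_zero, one_mul]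
    exact hnonneg _ (norm_nonneg _)
  obtain ⟨x₁, hx₁⟩ := hconn.nonempty
  have hM0 : 0 ≤ M := (abs_nonneg _).trans (hM x₁ hx₁)
  refine ⟨16 * C * A + C + 2 * M / B s₀, by positivity, fun x hx y hy => ?_⟩
  rcases eq_or_ne x y with rfl | hxy
  · simp [hmaj.2.2.1]
  set s : ℝ := ‖x - y‖ with hs
  have hspos : 0 < s := norm_pos_iff.2 (sub_ne_zero.2 hxy)
  have hBs : 0 ≤ B s := hnonneg s hspos.le
  have hCA : 0 ≤ 16 * C * A * B s := by positivity
  have hCB : 0 ≤ C * B s := by positivity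
  have hMB : 0 ≤ 2 * M / B s₀ * B s := by positivity
  rcases le_or_gt s₀ s with hlarge | hsmall
  · have h₁ : |u x - u y| ≤ 2 * M := by
      have := abs_sub (u x) (u y)
      linarith [hM x hx, hM y hy]
    have h₂ : 2 * M ≤ 2 * M / B s₀ * B s := by
      rw [div_mul_eq_mul_div, le_div_iff₀ hBpos]
      exact mul_le_mul_of_nonneg_left (hmaj.2.2.2.1 _ _ hs₀pos.le hlarge) (by positivity)
    linarith
  rcases le_or_gt (2 * s) (infDist x (frontier Ω)) with hfar | hnear
  · have := abs_sub_le_of_gradient_bound_interior hΩ hmaj hdiff hC hgrad hx hxy hfar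
    rw [← hs] at this
    linarith
  obtain ⟨p, hp, hxp⟩ := (infDist_lt_iff hne).1 hnear
  obtain ⟨v, hv, hcone⟩ := hdir p hp
  have hlint : ∫⁻ t in Ioc (0 : ℝ) (4 * s), ENNReal.ofReal (B t / t) ≤
      ENNReal.ofReal (A * B (4 * s)) :=
    le_self_add.trans (hreg (4 * s) (by positivity) (by linarith))
  have hB4 : B (4 * s) ≤ 4 * B s := hmaj.mul_le (by norm_num) hspos
  have hyp : dist y p < 3 * s := by
    have := dist_triangle_left y p x
    rw [dist_eq_norm x y] at this
    linarith
  have hmem : ∀ z ∈ Ω, dist z p < ε → ∀ t ∈ Ioc (0 : ℝ) (4 * s), z + t • v ∈ Ω :=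
    fun z hz hzp t ht => hcone z hz hzp t ht.1 (by linarith [ht.2]) (mem_ball_self (half_pos ht.1))
  have hdist : ∀ z ∈ Ω, dist z p < ε → ∀ t ∈ Ioc (0 : ℝ) (4 * s),
      t / 2 ≤ infDist (z + t • v) (frontier Ω) := fun z hz hzp t ht =>
    le_infDist_frontier_of_ball_subset hΩ hne (hcone z hz hzp t ht.1 (by linarith [ht.2]))
  have hray : ∀ z ∈ Ω, dist z p < ε → |u (z + (4 * s) • v) - u z| ≤ 8 * C * A * B s := by
    intro z hz hzp
    have h := abs_sub_le_of_gradient_bound_ray hΩ hmaj hu hC hgrad hv (by positivity)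
      (mul_nonneg hA.le (hnonneg _ (by positivity))) hlint hz (hmem z hz hzp) (hdist z hz hzp)
    have h' := mul_le_mul_of_nonneg_left hB4 (by positivity : 0 ≤ 2 * C * A)
    linarith
  have h4 : 4 * s ∈ Ioc (0 : ℝ) (4 * s) := ⟨by positivity, le_rfl⟩
  have hxε : dist x p < ε := by linarith
  have hyε : dist y p < ε := by linarith
  have hdiffv : x + (4 * s) • v - (y + (4 * s) • v) = x - y := by abel
  have hmid := abs_sub_le_of_gradient_bound_interior hΩ hmaj hdiff hC hgrad
    (x := x + (4 * s) • v) (y := y + (4 * s) • v) (hmem x hx hxε _ h4)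
    (fun h => hxy (add_right_cancel h))
    (by rw [hdiffv, ← hs]; linarith [hdist x hx hxε _ h4])
  rw [hdiffv, ← hs] at hmid
  have hx' := abs_le.1 (hray x hx hxε)
  have hy' := abs_le.1 (hray y hy hyε)
  have hmid' := abs_le.1 hmid
  refine abs_le.2 ⟨?_, ?_⟩ <;> linarith [hx'.1, hx'.2, hy'.1, hy'.2, hmid'.1, hmid'.2]

/-- For a bounded harmonic function on a bounded smooth domain and a regular
majorant `B`, being Lipschitz-`B` is equivalent to the gradient growth bound
`‖∇u x‖ ≤ C * B (δ x) / δ x`. -/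
theorem lipschitzB_iff_gradient_bound
    {n : ℕ} (Ω : Set (En n)) (hΩ_open : IsOpen Ω) (hΩ_conn : IsConnected Ω)
    (hΩ_bdd : Bornology.IsBounded Ω) (hΩ_smooth : HasSmoothBoundary Ω)
    (B : ℝ → ℝ) (hB : RegularMajorant B)
    (u : En n → ℝ) (hu : IsHarmonicOn u Ω)
    (hu_bdd : ∃ M : ℝ, ∀ x ∈ Ω, |u x| ≤ M) :
    LipschitzB B u Ω ↔
      ∃ C > (0:ℝ), ∀ x ∈ Ω,
        ‖gradient u x‖ ≤ C * B (infDist x (frontier Ω)) / infDist x (frontier Ω) := by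
  rcases subsingleton_or_nontrivial (En n) with hsub | hnontriv
  · refine iff_of_true ⟨1, one_pos, fun x _ y _ => ?_⟩ ⟨1, one_pos, fun x _ => ?_⟩
    · rw [Subsingleton.elim x y, sub_self, sub_self, norm_zero, hB.1.2.2.1, abs_zero, mul_zero]
    · rw [Subsingleton.elim (gradient u x) 0, norm_zero]
      have := hB.1.2.1 _ (infDist_nonneg (x := x) (s := frontier Ω))
      exact div_nonneg (by linarith) infDist_nonneg
  have hne := frontier_nonempty_of_isBounded hΩ_bdd hΩ_conn.nonempty
  exact ⟨gradient_bound_of_lipschitzB hΩ_open hne hB.1 hu,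
    lipschitzB_of_gradient_bound hΩ_open hΩ_conn hΩ_bdd hΩ_smooth hne hB
      (hu.1.of_le (by norm_num)) hu_bdd⟩
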